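/- Strong data-processing inequality for locally private channels (KL and chi-squared form): Let α > 0 and let Q be an α-DP channel from Z to O. Then there exist a probability space (Ω, ρ) and a jointly measurable family (ℓ_ω)_{ω∈Ω} of measurable functions ℓ_ω : Z → [0,1] such that for all probability measures P₁, P₂ on Z: KL(Q∘P₁ ‖ Q∘P₂) ≤ χ²(Q∘P₁ ‖ Q∘P₂) ≤ (e^α − 1)² · E_{ω∼ρ}[ D_{ℓ_ω}(P₁,P₂)² ]. In particular, since D_ℓ(P₁,P₂) ≤ D_TV(P₁,P₂), one has KL(Q∘P₁ ‖ Q∘P₂) ≤ (e^α − 1)²·D_TV(P₁,P₂)². -/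

import Mathlib

/-!
The measure `ν = ⨅ z, Q z` (infimum in the lattice of measures) satisfies
`ν ≤ Q z ≤ e^α ν` for every `z`: the second bound holds because `e^{-α} Q z` is a lower bound of
the family `(Q z')`.  Working with `ν` rather than with the pointwise infimum of the densities
avoids any dependence on the chosen versions, which are only determined almost everywhere for each
fixed `z`.  Truncating `q(o|z) / (dν/dμ)(o)` to `[1, e^α]` gives jointly measurable densities
`F o z ∈ [1, e^α]` of `Q z` with respect to `ν` (`exists_bounded_density`).

Let `ℓ_o(z) = (F o z - 1) / (e^α - 1) ∈ [0,1]` and let `ρ` be the normalization of `ν`.  The mixture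
`Q∘P` has `ν`-density `g(o) = ∫ F o z dP(z) ≥ 1` (`bind_eq_withDensity`), and
`|g₁(o) - g₂(o)| = (e^α - 1) D_{ℓ_o}(P₁,P₂)`.  Hence
`χ² = ∫ (g₁ - g₂)² / g₂ dν ≤ ∫ (g₁ - g₂)² dν ≤ (e^α - 1)² E_ρ[D_ℓ²]`, since `ν` has mass at most `1`.
The bound `KL ≤ χ²` comes from the pointwise inequality
`g₁ log (g₁/g₂) ≤ (g₁ - g₂)²/g₂ + (g₁ - g₂)`, whose last term has integral zero.  Finally
`D_ℓ ≤ D_TV` follows from the layer-cake formula.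
-/


/-- A probability space `(Ω, ρ)` together with a jointly measurable family
`(ℓ_ω)_{ω ∈ Ω}` of measurable functions `ℓ_ω : Z → [0,1]`. -/
structure TestFamily.{u', v'} (Z : Type u') [MeasurableSpace Z] : Type (max u' (v' + 1)) where
  Ω : Type v'
  [mΩ : MeasurableSpace Ω]
  ρ : MeasureTheory.Measure Ω
  prob : MeasureTheory.IsProbabilityMeasure ρ
  ℓ : Ω → Z → ℝ
  meas : Measurable (Function.uncurry ℓ)
  range01 : ∀ ω z, ℓ ω z ∈ Set.Icc (0 : ℝ) 1

open MeasureTheory ProbabilityTheory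
open scoped ENNReal Classical

universe u v

instance {Z : Type u} [MeasurableSpace Z] (tf : TestFamily.{u, v} Z) :
    MeasurableSpace tf.Ω := tf.mΩ

/-- `D_ℓ(P, Q) := |E_{z ∼ P} ℓ(z) − E_{z ∼ Q} ℓ(z)|`. -/
noncomputable def Dl {Z : Type*} [MeasurableSpace Z] (ℓ : Z → ℝ) (P Q : Measure Z) : ℝ :=
  |(∫ z, ℓ z ∂P) - ∫ z, ℓ z ∂Q|

/-- Kullback–Leibler divergence `KL(P‖Q) := ∫ log (dP/dQ) dP` when `P ≪ Q` (and the
log-likelihood ratio is integrable), `+∞` otherwise; valued in the extended reals. -/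
noncomputable def klDiv' {O : Type*} [MeasurableSpace O] (P Q : Measure O) : EReal :=
  if P ≪ Q ∧ Integrable (fun o => Real.log ((P.rnDeriv Q) o).toReal) P then
    ((∫ o, Real.log ((P.rnDeriv Q) o).toReal ∂P : ℝ) : EReal)
  else ⊤

/-- Chi-squared divergence `χ²(P‖Q) := ∫ (dP/dQ − 1)² dQ` when `P ≪ Q`, `+∞` otherwise;
valued in the extended reals. -/
noncomputable def chi2Div {O : Type*} [MeasurableSpace O] (P Q : Measure O) : EReal :=
  if P ≪ Q then
    ((∫⁻ o, ENNReal.ofReal ((((P.rnDeriv Q) o).toReal - 1) ^ 2) ∂Q : ℝ≥0∞) : EReal)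
  else ⊤

/-- Total variation distance `D_TV(P,Q) := sup_E |P(E) − Q(E)|`. -/
noncomputable def TVdist {Z : Type*} [MeasurableSpace Z] (P Q : Measure Z) : ℝ :=
  ⨆ E : {E : Set Z // MeasurableSet E}, |(P E.1).toReal - (Q E.1).toReal|

/-- The lattice infimum `ν` of the measures `Q z` dominates the whole channel with densities in
`[1, e^α]`, which can be chosen jointly measurable. -/
lemma exists_bounded_density
    {Z : Type u} {O : Type v} [MeasurableSpace Z] [MeasurableSpace O] [Nonempty Z]
    (α : ℝ) (hα : 0 < α)
    (Q : Kernel Z O) [IsMarkovKernel Q]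
    (hDP : ∀ z z' : Z, ∀ E : Set O, MeasurableSet E →
      Q z E ≤ ENNReal.ofReal (Real.exp α) * Q z' E)
    (μ : Measure O) [SigmaFinite μ] (q : O → Z → ℝ≥0∞)
    (hq : Measurable (Function.uncurry q))
    (hdens : ∀ z : Z, Q z = μ.withDensity fun o => q o z) :
    ∃ (ν : Measure O) (F : O → Z → ℝ), ν Set.univ ≤ 1 ∧ ν ≠ 0 ∧
      Measurable (Function.uncurry F) ∧ (∀ o z, F o z ∈ Set.Icc 1 (Real.exp α)) ∧
      ∀ z, Q z = ν.withDensity fun o => ENNReal.ofReal (F o z) := by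
  set c : ℝ≥0∞ := ENNReal.ofReal (Real.exp α) with hc
  have hc0 : c ≠ 0 := by simp [hc, Real.exp_pos]
  have hct : c ≠ ∞ := ENNReal.ofReal_ne_top
  have hexp : 1 ≤ Real.exp α := Real.one_le_exp hα.le
  let ν : Measure O := ⨅ z, Q z
  have hνle : ∀ z, ν ≤ Q z := fun z => iInf_le _ z
  have hleν : ∀ z, Q z ≤ c • ν := by
    intro z
    have h : c⁻¹ • Q z ≤ ν := by
      refine le_iInf fun z' => Measure.le_iff.2 fun E hE => ?_
      rw [Measure.smul_apply, smul_eq_mul]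
      calc c⁻¹ * Q z E ≤ c⁻¹ * (c * Q z' E) := by gcongr; exact hDP z z' E hE
        _ = Q z' E := by rw [← mul_assoc, ENNReal.inv_mul_cancel hc0 hct, one_mul]
    refine Measure.le_iff.2 fun E hE => ?_
    have hE' := h E
    rw [Measure.smul_apply, smul_eq_mul] at hE' ⊢
    calc Q z E = c * (c⁻¹ * Q z E) := by
          rw [← mul_assoc, ENNReal.mul_inv_cancel hc0 hct, one_mul]
      _ ≤ c * ν E := by gcongr
  obtain ⟨z₀⟩ := ‹Nonempty Z›
  have hν1 : ν Set.univ ≤ 1 := (hνle z₀ _).trans prob_le_one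
  have hν0 : ν ≠ 0 := by
    intro h
    have := hleν z₀ Set.univ
    simp [h] at this
  have : IsFiniteMeasure ν := ⟨hν1.trans_lt ENNReal.one_lt_top⟩
  have hac : ν ≪ μ := (Measure.absolutelyContinuous_of_le (hνle z₀)).trans
    (by rw [hdens z₀]; exact withDensity_absolutelyContinuous _ _)
  set m := ν.rnDeriv μ with hm
  have hmm : Measurable m := Measure.measurable_rnDeriv _ _
  have hνm : μ.withDensity m = ν := Measure.withDensity_rnDeriv_eq _ _ hac
  have hqz : ∀ z, Measurable fun o => q o z := fun z =>
    hq.comp (by fun_prop : Measurable fun o => (o, z))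
  let F : O → Z → ℝ := fun o z => max 1 (min (Real.exp α) (q o z / m o).toReal)
  have hF : Measurable (Function.uncurry F) := by
    have h1 : Measurable fun p : O × Z => q p.1 p.2 / m p.1 := hq.div (hmm.comp measurable_fst)
    exact measurable_const.max (measurable_const.min h1.ennreal_toReal)
  refine ⟨ν, F, hν1, hν0, hF,
    fun o z => ⟨le_max_left _ _, max_le hexp (min_le_left _ _)⟩, fun z => ?_⟩
  have hFz : Measurable fun o => ENNReal.ofReal (F o z) :=
    (hF.comp (by fun_prop : Measurable fun o => (o, z))).ennreal_ofReal
  rw [← hνm, ← withDensity_mul _ hmm hFz, hdens z]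
  refine withDensity_congr_ae ?_
  have h1 : m ≤ᵐ[μ] fun o => q o z := by
    refine ae_le_of_forall_setLIntegral_le_of_sigmaFinite hmm fun s hs _ => ?_
    rw [← withDensity_apply _ hs, ← withDensity_apply _ hs, hνm, ← hdens z]
    exact hνle z s
  have h2 : (fun o => q o z) ≤ᵐ[μ] fun o => c * m o := by
    refine ae_le_of_forall_setLIntegral_le_of_sigmaFinite (hqz z) fun s hs _ => ?_
    rw [lintegral_const_mul _ hmm, ← withDensity_apply _ hs, ← withDensity_apply _ hs, hνm,
      ← hdens z]
    exact hleν z s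
  filter_upwards [h1, h2, Measure.rnDeriv_lt_top ν μ] with o h1 h2 h3
  simp only [Pi.mul_apply]
  by_cases h0 : m o = 0
  · simpa [h0] using h2
  have h3' : m o ≠ ∞ := h3.ne
  have hlo : 1 ≤ q o z / m o := by
    rw [ENNReal.le_div_iff_mul_le (Or.inl h0) (Or.inl h3'), one_mul]; exact h1
  have hhi : q o z / m o ≤ c := ENNReal.div_le_of_le_mul h2
  have hne : q o z / m o ≠ ∞ := (hhi.trans_lt hct.lt_top).ne
  have hFeq : F o z = (q o z / m o).toReal := by
    have a : (q o z / m o).toReal ≤ Real.exp α :=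
      ENNReal.toReal_le_of_le_ofReal (Real.exp_pos _).le hhi
    have b : 1 ≤ (q o z / m o).toReal := by
      simpa using ENNReal.toReal_mono hne hlo
    simp only [F]
    rw [min_eq_right a, max_eq_right b]
  rw [hFeq, ENNReal.ofReal_toReal hne, ENNReal.mul_div_cancel h0 h3']

lemma bind_eq_withDensity
    {Z : Type u} {O : Type v} [MeasurableSpace Z] [MeasurableSpace O]
    (Q : Kernel Z O) (ν : Measure O) [IsFiniteMeasure ν] (F : O → Z → ℝ) (C : ℝ)
    (hF : Measurable (Function.uncurry F)) (hFr : ∀ o z, F o z ∈ Set.Icc 1 C)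
    (hQ : ∀ z, Q z = ν.withDensity fun o => ENNReal.ofReal (F o z))
    (P : Measure Z) [IsProbabilityMeasure P] :
    P.bind (fun z => Q z) = ν.withDensity fun o => ENNReal.ofReal (∫ z, F o z ∂P) := by
  have key : ∀ o, ENNReal.ofReal (∫ z, F o z ∂P) = ∫⁻ z, ENNReal.ofReal (F o z) ∂P := by
    intro o
    have hm : Measurable (F o) := hF.comp (by fun_prop : Measurable fun z => (o, z))
    refine ofReal_integral_eq_lintegral_ofReal ?_ ?_
    · refine Integrable.of_bound hm.aestronglyMeasurable C (ae_of_all _ fun z => ?_)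
      have := hFr o z
      rw [Real.norm_eq_abs, abs_le]
      exact ⟨by linarith [this.1, this.2], this.2⟩
    · exact ae_of_all _ fun z => zero_le_one.trans (hFr o z).1
  ext E hE
  rw [Measure.bind_apply hE Q.measurable.aemeasurable, withDensity_apply _ hE]
  simp_rw [key, hQ, withDensity_apply _ hE]
  refine lintegral_lintegral_swap ?_
  exact (hF.comp measurable_swap).ennreal_ofReal.aemeasurable

/-- For probability measures with densities `g₁, g₂ ∈ [1, C]` with respect to a common finite
measure `ν`, `KL ≤ χ² ≤ ∫ (g₁ - g₂)² dν`. -/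
lemma kl_chi2_withDensity {O : Type v} [MeasurableSpace O]
    (ν : Measure O) [IsFiniteMeasure ν] (g₁ g₂ : O → ℝ) (C : ℝ)
    (hg₁ : Measurable g₁) (hg₂ : Measurable g₂)
    (hr₁ : ∀ o, g₁ o ∈ Set.Icc 1 C) (hr₂ : ∀ o, g₂ o ∈ Set.Icc 1 C)
    (A B : Measure O) [IsProbabilityMeasure A] [IsProbabilityMeasure B]
    (hA : A = ν.withDensity fun o => ENNReal.ofReal (g₁ o))
    (hB : B = ν.withDensity fun o => ENNReal.ofReal (g₂ o)) :
    klDiv' A B ≤ chi2Div A B ∧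
      chi2Div A B ≤ ((∫ o, (g₁ o - g₂ o) ^ 2 ∂ν : ℝ) : EReal) := by
  have p₁ : ∀ o, 0 < g₁ o := fun o => zero_lt_one.trans_le (hr₁ o).1
  have p₂ : ∀ o, 0 < g₂ o := fun o => zero_lt_one.trans_le (hr₂ o).1
  have hm₁ : Measurable fun o => ENNReal.ofReal (g₁ o) := hg₁.ennreal_ofReal
  have hm₂ : Measurable fun o => ENNReal.ofReal (g₂ o) := hg₂.ennreal_ofReal
  have n₂ : ∀ᵐ o ∂ν, ENNReal.ofReal (g₂ o) ≠ 0 := ae_of_all _ fun o => by simp [p₂ o]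
  have hAν : A ≪ ν := by rw [hA]; exact withDensity_absolutelyContinuous _ _
  have hBν : B ≪ ν := by rw [hB]; exact withDensity_absolutelyContinuous _ _
  have hνB : ν ≪ B := by
    rw [hB]; exact withDensity_absolutelyContinuous' hm₂.aemeasurable n₂
  have hAB : A ≪ B := hAν.trans hνB
  have hrn : ∀ᵐ o ∂ν, (A.rnDeriv B o).toReal = g₁ o / g₂ o := by
    have h1 := Measure.rnDeriv_withDensity_right A ν hm₂.aemeasurable n₂
      (ae_of_all _ fun o => ENNReal.ofReal_ne_top)
    have h2 := Measure.rnDeriv_withDensity ν hm₁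
    rw [← hB] at h1
    rw [← hA] at h2
    filter_upwards [h1, h2] with o h1 h2
    rw [h1, h2, ENNReal.toReal_mul, ENNReal.toReal_inv, ENNReal.toReal_ofReal (p₁ o).le,
      ENNReal.toReal_ofReal (p₂ o).le]
    field_simp
  have bd : ∀ f : O → ℝ, Measurable f → ∀ K, (∀ o, |f o| ≤ K) → Integrable f ν :=
    fun f hf K hK => Integrable.of_bound hf.aestronglyMeasurable K (ae_of_all _ hK)
  have i₁ : Integrable g₁ ν := bd g₁ hg₁ C fun o => by
    rw [abs_of_pos (p₁ o)]; exact (hr₁ o).2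
  have i₂ : Integrable g₂ ν := bd g₂ hg₂ C fun o => by
    rw [abs_of_pos (p₂ o)]; exact (hr₂ o).2
  have hsq : ∀ o, (g₁ o - g₂ o) ^ 2 ≤ C ^ 2 := fun o => by
    obtain ⟨a, b⟩ := hr₁ o
    obtain ⟨c, d⟩ := hr₂ o
    exact sq_le_sq' (by linarith) (by linarith)
  have isq : Integrable (fun o => (g₁ o - g₂ o) ^ 2) ν :=
    bd _ (by fun_prop) (C ^ 2) fun o => by
      rw [abs_of_nonneg (sq_nonneg _)]; exact hsq o
  have hdiv : ∀ o, (g₁ o - g₂ o) ^ 2 / g₂ o ≤ (g₁ o - g₂ o) ^ 2 := fun o =>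
    div_le_self (sq_nonneg _) (hr₂ o).1
  have hdiv0 : ∀ o, 0 ≤ (g₁ o - g₂ o) ^ 2 / g₂ o := fun o =>
    div_nonneg (sq_nonneg _) (p₂ o).le
  have idiv : Integrable (fun o => (g₁ o - g₂ o) ^ 2 / g₂ o) ν :=
    bd _ (by fun_prop) (C ^ 2) fun o => by
      rw [abs_of_nonneg (hdiv0 o)]; exact (hdiv o).trans (hsq o)
  have hchi : chi2Div A B = ((∫ o, (g₁ o - g₂ o) ^ 2 / g₂ o ∂ν : ℝ) : EReal) := by
    rw [chi2Div, if_pos hAB]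
    have : ∫⁻ o, ENNReal.ofReal ((((A.rnDeriv B) o).toReal - 1) ^ 2) ∂B
        = ENNReal.ofReal (∫ o, (g₁ o - g₂ o) ^ 2 / g₂ o ∂ν) := by
      rw [ofReal_integral_eq_lintegral_ofReal idiv (ae_of_all _ hdiv0)]
      have hrnB : ∀ᵐ o ∂B, (A.rnDeriv B o).toReal = g₁ o / g₂ o := hBν.ae_le hrn
      rw [lintegral_congr_ae (g := fun o => ENNReal.ofReal ((g₁ o / g₂ o - 1) ^ 2))
        (by filter_upwards [hrnB] with o ho; rw [ho])]
      rw [hB, lintegral_withDensity_eq_lintegral_mul _ hm₂ (by fun_prop)]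
      refine lintegral_congr fun o => ?_
      rw [Pi.mul_apply, ← ENNReal.ofReal_mul (p₂ o).le]
      congr 1
      have := (p₂ o).ne'
      field_simp
    rw [this, EReal.coe_ennreal_ofReal, max_eq_left (integral_nonneg hdiv0)]
  -- Both measures are probability measures, so the first-order term integrates to zero.
  have hone : ∀ (g : O → ℝ), Integrable g ν → (∀ o, 0 < g o) →
      (ν.withDensity fun o => ENNReal.ofReal (g o)) Set.univ = 1 → ∫ o, g o ∂ν = 1 := by
    intro g hi hp h
    rw [withDensity_apply _ MeasurableSet.univ, Measure.restrict_univ,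
      ← ofReal_integral_eq_lintegral_ofReal hi (ae_of_all _ fun o => (hp o).le)] at h
    simpa using h
  have e₁ := hone g₁ i₁ p₁ (by rw [← hA]; exact measure_univ)
  have e₂ := hone g₂ i₂ p₂ (by rw [← hB]; exact measure_univ)
  refine ⟨?_, ?_⟩
  · have hrnA : ∀ᵐ o ∂A, (A.rnDeriv B o).toReal = g₁ o / g₂ o := hAν.ae_le hrn
    have hlogeq : (fun o => Real.log (A.rnDeriv B o).toReal) =ᵐ[A]
        fun o => Real.log (g₁ o / g₂ o) := by
      filter_upwards [hrnA] with o ho; rw [ho]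
    have hlogm : Measurable fun o => Real.log (g₁ o / g₂ o) := by fun_prop
    have hlogb : ∀ o, |Real.log (g₁ o / g₂ o)| ≤ Real.log C := by
      intro o
      rw [Real.log_div (p₁ o).ne' (p₂ o).ne', abs_le]
      have a := Real.log_nonneg (hr₁ o).1
      have b := Real.log_nonneg (hr₂ o).1
      have c := Real.log_le_log (p₁ o) (hr₁ o).2
      have d := Real.log_le_log (p₂ o) (hr₂ o).2
      constructor <;> linarith
    have hint : Integrable (fun o => Real.log (A.rnDeriv B o).toReal) A :=
      (Integrable.of_bound hlogm.aestronglyMeasurable (Real.log C)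
        (ae_of_all _ hlogb)).congr hlogeq.symm
    rw [klDiv', if_pos ⟨hAB, hint⟩, hchi, EReal.coe_le_coe_iff, integral_congr_ae hlogeq]
    have hI : ∫ o, Real.log (g₁ o / g₂ o) ∂A = ∫ o, g₁ o * Real.log (g₁ o / g₂ o) ∂ν := by
      rw [hA, integral_withDensity_eq_integral_toReal_smul hm₁
        (ae_of_all _ fun o => ENNReal.ofReal_lt_top)]
      refine integral_congr_ae (ae_of_all _ fun o => ?_)
      simp only [ENNReal.toReal_ofReal (p₁ o).le, smul_eq_mul]
    have hL : Integrable (fun o => g₁ o * Real.log (g₁ o / g₂ o)) ν :=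
      bd _ (by fun_prop) (C * Real.log C) fun o => by
        rw [abs_mul, abs_of_pos (p₁ o)]
        exact mul_le_mul (hr₁ o).2 (hlogb o) (abs_nonneg _) ((p₁ o).le.trans (hr₁ o).2)
    rw [hI]
    calc ∫ o, g₁ o * Real.log (g₁ o / g₂ o) ∂ν
        ≤ ∫ o, ((g₁ o - g₂ o) ^ 2 / g₂ o + (g₁ o - g₂ o)) ∂ν := by
          refine integral_mono hL (idiv.add (i₁.sub i₂)) fun o => ?_
          have hl := Real.log_le_sub_one_of_pos (div_pos (p₁ o) (p₂ o))
          calc g₁ o * Real.log (g₁ o / g₂ o) ≤ g₁ o * (g₁ o / g₂ o - 1) :=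
                mul_le_mul_of_nonneg_left hl (p₁ o).le
            _ = (g₁ o - g₂ o) ^ 2 / g₂ o + (g₁ o - g₂ o) := by
                have := (p₂ o).ne'
                field_simp
                ring
      _ = ∫ o, (g₁ o - g₂ o) ^ 2 / g₂ o ∂ν := by
          have i₁₂ : Integrable (fun o => g₁ o - g₂ o) ν := i₁.sub i₂
          rw [integral_add idiv i₁₂, integral_sub i₁ i₂, e₁, e₂]; ring
  · rw [hchi, EReal.coe_le_coe_iff]
    exact integral_mono idiv isq hdiv

lemma Dl_le_TVdist {Z : Type u} [MeasurableSpace Z] (ℓ : Z → ℝ) (hℓ : Measurable ℓ)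
    (h01 : ∀ z, ℓ z ∈ Set.Icc (0 : ℝ) 1) (P₁ P₂ : Measure Z)
    [IsProbabilityMeasure P₁] [IsProbabilityMeasure P₂] :
    Dl ℓ P₁ P₂ ≤ TVdist P₁ P₂ := by
  have layer : ∀ (P : Measure Z) [IsProbabilityMeasure P],
      ∫ z, ℓ z ∂P = ∫ t in Set.Ioc (0 : ℝ) 1, P.real {a | t ≤ ℓ a} := by
    intro P _
    refine Integrable.integral_eq_integral_Ioc_meas_le ?_ (ae_of_all _ fun z => (h01 z).1)
      (ae_of_all _ fun z => (h01 z).2)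
    refine Integrable.of_bound hℓ.aestronglyMeasurable 1 (ae_of_all _ fun z => ?_)
    rw [Real.norm_eq_abs, abs_of_nonneg (h01 z).1]
    exact (h01 z).2
  have hint : ∀ (P : Measure Z) [IsProbabilityMeasure P],
      IntegrableOn (fun t => P.real {a | t ≤ ℓ a}) (Set.Ioc (0 : ℝ) 1) := by
    intro P _
    have hanti : Antitone fun t : ℝ => P.real {a | t ≤ ℓ a} := fun s t hst =>
      measureReal_mono fun a (ha : t ≤ ℓ a) => hst.trans ha
    refine Integrable.of_bound hanti.measurable.aestronglyMeasurable 1 (ae_of_all _ fun t => ?_)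
    rw [Real.norm_eq_abs, abs_of_nonneg measureReal_nonneg]
    exact measureReal_le_one
  have hbdd : BddAbove (Set.range fun E : {E : Set Z // MeasurableSet E} =>
      |(P₁ E.1).toReal - (P₂ E.1).toReal|) := by
    refine ⟨1, ?_⟩
    rintro _ ⟨E, rfl⟩
    have a := measureReal_le_one (μ := P₁) (s := E.1)
    have b := measureReal_le_one (μ := P₂) (s := E.1)
    have c := measureReal_nonneg (μ := P₁) (s := E.1)
    have d := measureReal_nonneg (μ := P₂) (s := E.1)
    simp only [Measure.real] at a b c d
    simp only [abs_le]
    constructor <;> linarith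
  rw [Dl, layer P₁, layer P₂, ← integral_sub (hint P₁) (hint P₂), ← Real.norm_eq_abs]
  refine (norm_setIntegral_le_of_norm_le_const (C := TVdist P₁ P₂) (by simp) fun t _ => ?_).trans
    (by simp)
  exact le_ciSup hbdd ⟨{a | t ≤ ℓ a}, measurableSet_le measurable_const hℓ⟩

/-- **Strong data-processing inequality for locally private channels (KL and χ² form).**
If `Q` is an `α`-DP channel from `Z` to `O` (admitting jointly measurable densities with
respect to a σ-finite measure `μ` on `O`, with measurable pointwise infimum), then there is
a probability space `(Ω, ρ)` and a jointly measurable family `(ℓ_ω)` of `[0,1]`-valued test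
functions on `Z` such that for all probability measures `P₁, P₂` on `Z`,
`KL(Q∘P₁ ‖ Q∘P₂) ≤ χ²(Q∘P₁ ‖ Q∘P₂) ≤ (e^α − 1)² E_ρ[D_{ℓ_ω}(P₁,P₂)²]`;
in particular `KL(Q∘P₁ ‖ Q∘P₂) ≤ (e^α − 1)² D_TV(P₁,P₂)²`. -/
theorem strong_data_processing_kl_chi2
    {Z : Type u} {O : Type v} [MeasurableSpace Z] [MeasurableSpace O]
    (α : ℝ) (hα : 0 < α)
    (Q : Kernel Z O) [IsMarkovKernel Q]
    (hDP : ∀ z z' : Z, ∀ E : Set O, MeasurableSet E →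
      Q z E ≤ ENNReal.ofReal (Real.exp α) * Q z' E)
    (μ : Measure O) [SigmaFinite μ] (q : O → Z → ℝ≥0∞)
    (hq : Measurable (Function.uncurry q))
    (hdens : ∀ z : Z, Q z = μ.withDensity fun o => q o z)
    (hinf : Measurable fun o => ⨅ z : Z, q o z) :
    (∃ tf : TestFamily.{u, v} Z,
      ∀ P₁ P₂ : Measure Z, IsProbabilityMeasure P₁ → IsProbabilityMeasure P₂ →
        klDiv' (P₁.bind fun z => Q z) (P₂.bind fun z => Q z) ≤
          chi2Div (P₁.bind fun z => Q z) (P₂.bind fun z => Q z) ∧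
        chi2Div (P₁.bind fun z => Q z) (P₂.bind fun z => Q z) ≤
          (((Real.exp α - 1) ^ 2 : ℝ) : EReal) *
            ((∫ ω, (Dl (tf.ℓ ω) P₁ P₂) ^ 2 ∂tf.ρ : ℝ) : EReal)) ∧
    ∀ P₁ P₂ : Measure Z, IsProbabilityMeasure P₁ → IsProbabilityMeasure P₂ →
      klDiv' (P₁.bind fun z => Q z) (P₂.bind fun z => Q z) ≤
        (((Real.exp α - 1) ^ 2 * TVdist P₁ P₂ ^ 2 : ℝ) : EReal) := by
  have hmain : ∃ tf : TestFamily.{u, v} Z,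
      ∀ P₁ P₂ : Measure Z, IsProbabilityMeasure P₁ → IsProbabilityMeasure P₂ →
        klDiv' (P₁.bind fun z => Q z) (P₂.bind fun z => Q z) ≤
          chi2Div (P₁.bind fun z => Q z) (P₂.bind fun z => Q z) ∧
        chi2Div (P₁.bind fun z => Q z) (P₂.bind fun z => Q z) ≤
          (((Real.exp α - 1) ^ 2 : ℝ) : EReal) *
            ((∫ ω, (Dl (tf.ℓ ω) P₁ P₂) ^ 2 ∂tf.ρ : ℝ) : EReal) := by
    rcases isEmpty_or_nonempty Z with hZ | hZ
    -- There is no probability measure on an empty space, so any test family will do.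
    · refine ⟨{ Ω := PUnit, ρ := Measure.dirac PUnit.unit, prob := inferInstance,
                ℓ := fun _ _ => 0, meas := measurable_const, range01 := by simp }, ?_⟩
      intro P₁ _ h₁
      exact (hZ.false (nonempty_of_isProbabilityMeasure P₁).some).elim
    obtain ⟨ν, F, hν1, hν0, hF, hFr, hQ⟩ := exists_bounded_density α hα Q hDP μ q hq hdens
    have hfin : IsFiniteMeasure ν := ⟨hν1.trans_lt ENNReal.one_lt_top⟩
    have hνu : ν Set.univ ≠ 0 := by simpa using hν0
    have hE : 0 < Real.exp α - 1 := by
      have := Real.one_lt_exp_iff.2 hα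
      linarith
    let tf : TestFamily.{u, v} Z :=
      { Ω := O
        ρ := (ν Set.univ)⁻¹ • ν
        prob := ⟨by
          rw [Measure.smul_apply, smul_eq_mul]
          exact ENNReal.inv_mul_cancel hνu (measure_ne_top _ _)⟩
        ℓ := fun o z => (F o z - 1) / (Real.exp α - 1)
        meas := (hF.sub_const 1).div_const _
        range01 := fun o z => ⟨div_nonneg (sub_nonneg.2 (hFr o z).1) hE.le,
          (div_le_one hE).2 (sub_le_sub_right (hFr o z).2 1)⟩ }
    refine ⟨tf, ?_⟩
    intro P₁ P₂ h₁ h₂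
    have hFo : ∀ o, Measurable (F o) := fun o =>
      hF.comp (by fun_prop : Measurable fun z => (o, z))
    have hFi : ∀ (P : Measure Z) [IsProbabilityMeasure P] (o : O), Integrable (F o) P := by
      intro P _ o
      refine Integrable.of_bound (hFo o).aestronglyMeasurable (Real.exp α)
        (ae_of_all _ fun z => ?_)
      rw [Real.norm_eq_abs, abs_of_nonneg (zero_le_one.trans (hFr o z).1)]
      exact (hFr o z).2
    have hgm : ∀ (P : Measure Z) [IsProbabilityMeasure P],
        Measurable fun o => ∫ z, F o z ∂P := fun P _ =>
      (hF.stronglyMeasurable.integral_prod_right (ν := P)).measurable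
    have hgr : ∀ (P : Measure Z) [IsProbabilityMeasure P] (o : O),
        ∫ z, F o z ∂P ∈ Set.Icc 1 (Real.exp α) := by
      intro P _ o
      constructor
      · simpa using integral_mono (integrable_const (1 : ℝ)) (hFi P o) fun z => (hFr o z).1
      · simpa using integral_mono (hFi P o) (integrable_const (Real.exp α)) fun z => (hFr o z).2
    have hbp : ∀ (P : Measure Z) [IsProbabilityMeasure P],
        IsProbabilityMeasure (P.bind fun z => Q z) := fun P _ =>
      inferInstanceAs (IsProbabilityMeasure (P.bind Q))
    have := hbp P₁
    have := hbp P₂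
    obtain ⟨k₁, k₂⟩ := kl_chi2_withDensity ν _ _ (Real.exp α) (hgm P₁) (hgm P₂) (hgr P₁) (hgr P₂)
      (P₁.bind fun z => Q z) (P₂.bind fun z => Q z)
      (bind_eq_withDensity Q ν F _ hF hFr hQ P₁) (bind_eq_withDensity Q ν F _ hF hFr hQ P₂)
    refine ⟨k₁, k₂.trans ?_⟩
    rw [← EReal.coe_mul, EReal.coe_le_coe_iff]
    have hD : ∀ o, (∫ z, F o z ∂P₁ - ∫ z, F o z ∂P₂) ^ 2
        = (Real.exp α - 1) ^ 2 * (Dl (tf.ℓ o) P₁ P₂) ^ 2 := by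
      intro o
      have hl : ∀ (P : Measure Z) [IsProbabilityMeasure P],
          ∫ z, tf.ℓ o z ∂P = (∫ z, F o z ∂P - 1) / (Real.exp α - 1) := by
        intro P _
        change ∫ z, (F o z - 1) / (Real.exp α - 1) ∂P = _
        rw [integral_div, integral_sub (hFi P o) (integrable_const _)]
        simp
      rw [Dl, sq_abs, hl P₁, hl P₂]
      field_simp
      ring
    simp_rw [hD]
    rw [integral_const_mul]
    refine mul_le_mul_of_nonneg_left ?_ (sq_nonneg _)
    change _ ≤ ∫ o, (Dl (tf.ℓ o) P₁ P₂) ^ 2 ∂((ν Set.univ)⁻¹ • ν)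
    rw [integral_smul_measure, smul_eq_mul]
    refine le_mul_of_one_le_left (integral_nonneg fun o => sq_nonneg _) ?_
    have := ENNReal.toReal_mono (ENNReal.inv_ne_top.2 hνu) (ENNReal.one_le_inv.2 hν1)
    simpa using this
  refine ⟨hmain, fun P₁ P₂ h₁ h₂ => ?_⟩
  obtain ⟨tf, htf⟩ := hmain
  obtain ⟨k₁, k₂⟩ := htf P₁ P₂ h₁ h₂
  refine (k₁.trans k₂).trans ?_
  rw [← EReal.coe_mul, EReal.coe_le_coe_iff]
  refine mul_le_mul_of_nonneg_left ?_ (sq_nonneg _)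
  have := tf.prob
  have hb : ∀ ω, (Dl (tf.ℓ ω) P₁ P₂) ^ 2 ≤ TVdist P₁ P₂ ^ 2 := fun ω =>
    pow_le_pow_left₀ (abs_nonneg _)
      (Dl_le_TVdist _ (tf.meas.comp (by fun_prop : Measurable fun z => (ω, z)))
        (tf.range01 ω) P₁ P₂) 2
  calc ∫ ω, (Dl (tf.ℓ ω) P₁ P₂) ^ 2 ∂tf.ρ ≤ ∫ _, TVdist P₁ P₂ ^ 2 ∂tf.ρ :=
        integral_mono_of_nonneg (ae_of_all _ fun ω => sq_nonneg _) (integrable_const _)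
          (ae_of_all _ hb)
    _ = TVdist P₁ P₂ ^ 2 := by simp
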